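/- Let g = D(2,1;a) with a ∈ Q \ {0,−1}, with Chevalley-type generators h_i, e_i, f_i (i = 1,2,3) subject to [h_i,h_j]=0, [e_1,e_1]=[f_1,f_1]=0, [h_i,e_j]=a_{ij}e_j, [h_i,f_j]=−a_{ij}f_j, [e_i,f_j]=δ_{ij}h_i, where the Cartan matrix has rows (0,1,a),(−1,2,0),(−1,0,2). Then the bilinear form determined by (e_1,f_1)=1, (e_2,f_2)=−1, (e_3,f_3)=−1/a, (h_1,h_2)=−1, (h_1,h_3)=−1, (h_2,h_2)=−2, (h_3,h_3)=−2/a (all other pairings of generators zero), extended by invariance, is an even supersymmetric invariant bilinear form on g taking values in Q on the Chevalley basis. -/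

import Mathlib

/-- The Chevalley basis of `D(2,1;a)` built from the generators `hᵢ, eᵢ, fᵢ` (`i = 0,1,2`
here, corresponding to `i = 1,2,3` in the usual notation):
`{H₁, H₂, H₃, e₁, e₂, e₃, f₁, f₂, f₃, e₁₂, e₁₃, e₁₂₃, e₁₁₂₃, f₂₁, f₃₁, f₃₂₁, f₃₂₁₁}`. -/
def chevalleyBasisD21a {L : Type*} [AddCommGroup L] [Module ℂ L]
    (br : L →ₗ[ℂ] L →ₗ[ℂ] L) (a : ℚ) (h e f : Fin 3 → L) : Set L :=
  { h 0,
    (1 / (1 + (a : ℂ))) • ((2 : ℂ) • h 0 - h 1 - (a : ℂ) • h 2),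
    h 2,
    e 0, e 1, e 2, f 0, f 1, f 2,
    br (e 0) (e 1), br (e 0) (e 2), br (br (e 0) (e 1)) (e 2),
    (1 / (1 + (a : ℂ))) • br (e 0) (br (br (e 0) (e 1)) (e 2)),
    br (f 1) (f 0), br (f 2) (f 0), br (f 2) (br (f 1) (f 0)),
    -((1 / (1 + (a : ℂ))) • br (br (f 2) (br (f 1) (f 0))) (f 0)) }

/-- The algebraic relations of `D(2,1;a)` (with a complex parameter). -/
structure D21 {L : Type*} [AddCommGroup L] [Module ℂ L] (a : ℂ)
    (br : L →ₗ[ℂ] L →ₗ[ℂ] L) (P : Bool → Submodule ℂ L) (h e f : Fin 3 → L) : Prop where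
  brP : ∀ (p q : Bool), ∀ x ∈ P p, ∀ y ∈ P q, br x y ∈ P (xor p q)
  skew : ∀ (p q : Bool), ∀ x ∈ P p, ∀ y ∈ P q,
      br x y = (if p && q then (1 : ℂ) else -1) • br y x
  jac : ∀ (p q : Bool), ∀ x ∈ P p, ∀ y ∈ P q, ∀ z : L,
      br x (br y z) = br (br x y) z + (if p && q then (-1 : ℂ) else 1) • br y (br x z)
  hP : ∀ i, h i ∈ P false
  eP : ∀ i, e i ∈ P (decide (i = 0))
  fP : ∀ i, f i ∈ P (decide (i = 0))
  hh : ∀ i j, br (h i) (h j) = 0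
  ee : br (e 0) (e 0) = 0
  ff : br (f 0) (f 0) = 0
  he : ∀ i j, br (h i) (e j) = (!![(0 : ℂ), 1, a; -1, 2, 0; -1, 0, 2] i j) • e j
  hf : ∀ i j, br (h i) (f j) = -((!![(0 : ℂ), 1, a; -1, 2, 0; -1, 0, 2] i j) • f j)
  ef : ∀ i j, br (e i) (f j) = if i = j then h i else 0

/-- The positive root vectors. -/
def rootE {L : Type*} [AddCommGroup L] [Module ℂ L]
    (br : L →ₗ[ℂ] L →ₗ[ℂ] L) (e : Fin 3 → L) : Fin 7 → L :=
  ![e 0, e 1, e 2, br (e 0) (e 1), br (e 0) (e 2), br (br (e 0) (e 1)) (e 2),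
    br (e 0) (br (br (e 0) (e 1)) (e 2))]

namespace D21

variable {L : Type*} [AddCommGroup L] [Module ℂ L] {a : ℂ}
    {br : L →ₗ[ℂ] L →ₗ[ℂ] L} {P : Bool → Submodule ℂ L} {h e f : Fin 3 → L}

theorem flip (S : D21 a br P h e f) : D21 a br P (-h) f ![-e 0, e 1, e 2] where
  brP := S.brP
  skew := S.skew
  jac := S.jac
  hP i := neg_mem (S.hP i)
  eP := S.fP
  fP i := by
    have := S.eP i
    fin_cases i <;> simpa using this
  hh i j := by simp [S.hh]
  ee := S.ff
  ff := by simp [S.ee]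
  he i j := by simp [S.hf]
  hf i j := by
    have := S.he i j
    fin_cases j <;> simp at this ⊢ <;> simp [this]
  ef i j := by
    have h1 := S.skew _ _ _ (S.fP i) _ (S.eP j)
    have h2 := S.ef j i
    fin_cases i <;> fin_cases j <;> simp at h1 h2 ⊢ <;> simp [h1, h2]

theorem ske (S : D21 a br P h e f) {q : Bool} {x y : L} (hx : x ∈ P false) (hy : y ∈ P q) :
    br x y = - br y x := by
  simpa using S.skew false q x hx y hy

theorem ske' (S : D21 a br P h e f) {q : Bool} {x y : L} (hx : x ∈ P q) (hy : y ∈ P false) :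
    br x y = - br y x := by
  simpa using S.skew q false x hx y hy

theorem sko (S : D21 a br P h e f) {x y : L} (hx : x ∈ P true) (hy : y ∈ P true) :
    br x y = br y x := by
  simpa using S.skew true true x hx y hy

theorem je (S : D21 a br P h e f) {q : Bool} {x y : L} (hx : x ∈ P false) (hy : y ∈ P q) (z : L) :
    br x (br y z) = br (br x y) z + br y (br x z) := by
  simpa using S.jac false q x hx y hy z

theorem je' (S : D21 a br P h e f) {q : Bool} {x y : L} (hx : x ∈ P q) (hy : y ∈ P false) (z : L) :
    br x (br y z) = br (br x y) z + br y (br x z) := by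
  simpa using S.jac q false x hx y hy z

theorem jo (S : D21 a br P h e f) {x y : L} (hx : x ∈ P true) (hy : y ∈ P true) (z : L) :
    br x (br y z) = br (br x y) z - br y (br x z) := by
  simpa [sub_eq_add_neg] using S.jac true true x hx y hy z

theorem e0 (S : D21 a br P h e f) : e 0 ∈ P true := by simpa using S.eP 0
theorem e1 (S : D21 a br P h e f) : e 1 ∈ P false := by simpa using S.eP 1
theorem e2 (S : D21 a br P h e f) : e 2 ∈ P false := by simpa using S.eP 2
theorem f0 (S : D21 a br P h e f) : f 0 ∈ P true := by simpa using S.fP 0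
theorem f1 (S : D21 a br P h e f) : f 1 ∈ P false := by simpa using S.fP 1
theorem f2 (S : D21 a br P h e f) : f 2 ∈ P false := by simpa using S.fP 2

theorem rootP (S : D21 a br P h e f) (k : Fin 7) :
    rootE br e k ∈ P (![true, false, false, true, true, true, false] k) := by
  have h3 := S.brP _ _ _ S.e0 _ S.e1
  have h4 := S.brP _ _ _ S.e0 _ S.e2
  have h5 := S.brP _ _ _ h3 _ S.e2
  have h6 := S.brP _ _ _ S.e0 _ h5
  fin_cases k
  · exact S.e0
  · exact S.e1
  · exact S.e2
  · exact h3
  · exact h4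
  · exact h5
  · exact h6

theorem fe (S : D21 a br P h e f) (i j : Fin 3) :
    br (f i) (e j) = if i = j then (if i = 0 then h i else - h i) else 0 := by
  have h1 := S.skew _ _ _ (S.fP i) _ (S.eP j)
  have h2 := S.ef j i
  fin_cases i <;> fin_cases j <;> simp at h1 h2 ⊢ <;> simp [h1, h2]

theorem eh (S : D21 a br P h e f) (i j : Fin 3) :
    br (e i) (h j) = (-!![(0 : ℂ), 1, a; -1, 2, 0; -1, 0, 2] j i) • e i := by
  rw [S.ske' (S.eP i) (S.hP j), S.he, neg_smul]

/-- weights add up -/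
theorem wadd (S : D21 a br P h e f) {d x y : L} {m n k : ℂ} {q : Bool} (hd : d ∈ P false)
    (hx : x ∈ P q) (h1 : br d x = m • x) (h2 : br d y = n • y) (hk : k = m + n) :
    br d (br x y) = k • br x y := by
  rw [S.je hd hx, h1, h2, hk]
  simp [add_smul]

theorem rootwt (S : D21 a br P h e f) {d : L} (hd : d ∈ P false) {u v w : ℂ}
    (h0 : br d (e 0) = u • e 0) (h1 : br d (e 1) = v • e 1) (h2 : br d (e 2) = w • e 2)
    (k : Fin 7) :
    br d (rootE br e k) =
      (![u, v, w, u + v, u + w, u + v + w, 2 * u + v + w] k) • rootE br e k := by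
  have h3 := S.wadd hd S.e0 h0 h1 rfl
  have h4 := S.wadd hd S.e0 h0 h2 rfl
  have h5 := S.wadd hd (S.rootP 3) h3 h2 rfl
  have h6 := S.wadd (k := 2 * u + v + w) hd S.e0 h0 h5 (by ring)
  fin_cases k
  · exact h0
  · exact h1
  · exact h2
  · exact h3
  · exact h4
  · exact h5
  · exact h6

theorem f0E3 (S : D21 a br P h e f) : br (f 0) (rootE br e 3) = e 1 := by
  change br (f 0) (br (e 0) (e 1)) = _
  rw [S.jo S.f0 S.e0, S.fe, S.fe]
  simp [S.he]

theorem f0E4 (S : D21 a br P h e f) : br (f 0) (rootE br e 4) = a • e 2 := by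
  change br (f 0) (br (e 0) (e 2)) = _
  rw [S.jo S.f0 S.e0, S.fe, S.fe]
  simp [S.he]

theorem f1E3 (S : D21 a br P h e f) : br (f 1) (rootE br e 3) = - e 0 := by
  change br (f 1) (br (e 0) (e 1)) = _
  rw [S.je S.f1 S.e0, S.fe, S.fe]
  simp [S.eh]

theorem f2E3 (S : D21 a br P h e f) : br (f 2) (rootE br e 3) = 0 := by
  change br (f 2) (br (e 0) (e 1)) = _
  rw [S.je S.f2 S.e0, S.fe, S.fe]
  simp

theorem f2E4 (S : D21 a br P h e f) : br (f 2) (rootE br e 4) = - e 0 := by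
  change br (f 2) (br (e 0) (e 2)) = _
  rw [S.je S.f2 S.e0, S.fe, S.fe]
  simp [S.eh]

theorem f1E5 (S : D21 a br P h e f) : br (f 1) (rootE br e 5) = - rootE br e 4 := by
  change br (f 1) (br (rootE br e 3) (e 2)) = _
  rw [S.je S.f1 (S.rootP 3), S.fe, S.f1E3]
  simp [rootE]

theorem hE (S : D21 a br P h e f) (i : Fin 3) (k : Fin 7) :
    br (h i) (rootE br e k) =
      (![!![(0 : ℂ), 1, a; -1, 2, 0; -1, 0, 2] i 0, !![(0 : ℂ), 1, a; -1, 2, 0; -1, 0, 2] i 1,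
        !![(0 : ℂ), 1, a; -1, 2, 0; -1, 0, 2] i 2,
        !![(0 : ℂ), 1, a; -1, 2, 0; -1, 0, 2] i 0 + !![(0 : ℂ), 1, a; -1, 2, 0; -1, 0, 2] i 1,
        !![(0 : ℂ), 1, a; -1, 2, 0; -1, 0, 2] i 0 + !![(0 : ℂ), 1, a; -1, 2, 0; -1, 0, 2] i 2,
        !![(0 : ℂ), 1, a; -1, 2, 0; -1, 0, 2] i 0 + !![(0 : ℂ), 1, a; -1, 2, 0; -1, 0, 2] i 1 +
          !![(0 : ℂ), 1, a; -1, 2, 0; -1, 0, 2] i 2,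
        2 * !![(0 : ℂ), 1, a; -1, 2, 0; -1, 0, 2] i 0 + !![(0 : ℂ), 1, a; -1, 2, 0; -1, 0, 2] i 1 +
          !![(0 : ℂ), 1, a; -1, 2, 0; -1, 0, 2] i 2] k) • rootE br e k :=
  S.rootwt (S.hP i) (S.he i 0) (S.he i 1) (S.he i 2) k

theorem f2E5 (S : D21 a br P h e f) : br (f 2) (rootE br e 5) = - rootE br e 3 := by
  have h3 := S.hE 2 3
  change br (f 2) (br (rootE br e 3) (e 2)) = _
  rw [S.je S.f2 (S.rootP 3), S.fe, S.f2E3]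
  simp at h3
  simp [S.ske' (S.rootP 3) (S.hP 2), h3]

theorem f0E5 (S : D21 a br P h e f) : br (f 0) (rootE br e 5) = br (e 1) (e 2) := by
  change br (f 0) (br (rootE br e 3) (e 2)) = _
  rw [S.jo S.f0 (S.rootP 3), S.fe, S.f0E3]
  simp

theorem f0E6 (S : D21 a br P h e f) : br (f 0) (rootE br e 6) =
    (1 + a) • rootE br e 5 - br (e 0) (br (e 1) (e 2)) := by
  have h5 := S.hE 0 5
  change br (f 0) (br (e 0) (rootE br e 5)) = _
  rw [S.jo S.f0 S.e0, S.fe, S.f0E5]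
  simp at h5
  simp [h5]

theorem f1f0E6 (S : D21 a br P h e f) : br (f 1) (br (f 0) (rootE br e 6)) =
    -((1 + a) • rootE br e 4) := by
  rw [S.f0E6, map_sub, map_smul, S.f1E5, S.je S.f1 S.e0, S.je S.f1 S.e1]
  simp [S.fe, S.he]

theorem e1E4 (S : D21 a br P h e f) (hX : br (e 1) (e 2) = 0) :
    br (e 1) (rootE br e 4) = - rootE br e 5 := by
  change br (e 1) (br (e 0) (e 2)) = _
  rw [S.je S.e1 S.e0, hX, S.ske S.e1 S.e0]
  simp [rootE]

theorem root_ne (S : D21 a br P h e f) (ha : 1 + a ≠ 0) (hne : ∀ i, e i ≠ 0) (k : Fin 7) :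
    rootE br e k ≠ 0 := by
  have h4 : rootE br e 4 ≠ 0 := by
    intro h0
    have := S.f2E4
    rw [h0] at this
    simp [hne] at this
  fin_cases k
  · exact hne 0
  · exact hne 1
  · exact hne 2
  · intro h0
    have := S.f0E3
    simp at h0
    rw [h0] at this
    simp at this
    exact hne 1 this.symm
  · exact h4
  · intro h0
    have := S.f1E5
    simp at h0
    rw [h0] at this
    simp [h4] at this
  · intro h0
    have := S.f1f0E6
    simp at h0
    rw [h0] at this
    simp [h4, ha] at this

end D21

/-- The basis vectors. -/
def bvec {L : Type*} [AddCommGroup L] [Module ℂ L]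
    (br : L →ₗ[ℂ] L →ₗ[ℂ] L) (h e f : Fin 3 → L) : Fin 17 → L :=
  Fin.append h (Fin.append (rootE br e) (rootE br f))

/-- Integer weights of the basis vectors. -/
def bwt : Fin 17 → ℤ :=
  ![0, 0, 0, 1, 10, 100, 11, 101, 111, 112, -1, -10, -100, -11, -101, -111, -112]

/-- Parities of the basis vectors. -/
def bpar : Fin 17 → Bool :=
  ![false, false, false, true, false, false, true, true, true, false,
    true, false, false, true, true, true, false]

namespace D21

variable {L : Type*} [AddCommGroup L] [Module ℂ L] {a : ℂ}
    {br : L →ₗ[ℂ] L →ₗ[ℂ] L} {P : Bool → Submodule ℂ L} {h e f : Fin 3 → L}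

theorem bP (S : D21 a br P h e f) (j : Fin 17) : bvec br h e f j ∈ P (bpar j) := by
  have hE := S.rootP
  have hF := S.flip.rootP
  have hH := S.hP
  fin_cases j
  · exact hH 0
  · exact hH 1
  · exact hH 2
  · exact hE 0
  · exact hE 1
  · exact hE 2
  · exact hE 3
  · exact hE 4
  · exact hE 5
  · exact hE 6
  · exact hF 0
  · exact hF 1
  · exact hF 2
  · exact hF 3
  · exact hF 4
  · exact hF 5
  · exact hF 6

theorem exists_d (S : D21 a br P h e f) (ha : 1 + a ≠ 0) : ∃ d ∈ P false,
    ∀ j, br d (bvec br h e f j) = (bwt j : ℂ) • bvec br h e f j := by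
  obtain ⟨c, hc⟩ : ∃ c : ℂ, c * (1 + a) = 112 := ⟨112 / (1 + a), by field_simp⟩
  set d : L := c • h 0 + ((10 - c) / 2) • h 1 + ((100 - a * c) / 2) • h 2 with hd
  have hdP : d ∈ P false :=
    add_mem (add_mem (Submodule.smul_mem _ _ (S.hP 0)) (Submodule.smul_mem _ _ (S.hP 1)))
      (Submodule.smul_mem _ _ (S.hP 2))
  have hh : ∀ i, br d (h i) = 0 := by intro i; simp [hd, S.hh]
  have he0 : br d (e 0) = (1 : ℂ) • e 0 := by
    simp only [hd, map_add, map_smul, LinearMap.add_apply, LinearMap.smul_apply, S.he, smul_smul,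
      ← add_smul]
    congr 1; simp; linear_combination hc / 2
  have he1 : br d (e 1) = (10 : ℂ) • e 1 := by
    simp only [hd, map_add, map_smul, LinearMap.add_apply, LinearMap.smul_apply, S.he, smul_smul,
      ← add_smul]
    congr 1; simp
  have he2 : br d (e 2) = (100 : ℂ) • e 2 := by
    simp only [hd, map_add, map_smul, LinearMap.add_apply, LinearMap.smul_apply, S.he, smul_smul,
      ← add_smul]
    congr 1; simp; ring
  have hf0 : br d (f 0) = (-1 : ℂ) • f 0 := by
    simp only [hd, map_add, map_smul, LinearMap.add_apply, LinearMap.smul_apply, S.hf, smul_smul,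
      ← add_smul, ← neg_smul]
    congr 1; simp; linear_combination -hc / 2
  have hf1 : br d (f 1) = (-10 : ℂ) • f 1 := by
    simp only [hd, map_add, map_smul, LinearMap.add_apply, LinearMap.smul_apply, S.hf, smul_smul,
      ← add_smul, ← neg_smul]
    congr 1; simp; ring
  have hf2 : br d (f 2) = (-100 : ℂ) • f 2 := by
    simp only [hd, map_add, map_smul, LinearMap.add_apply, LinearMap.smul_apply, S.hf, smul_smul,
      ← add_smul, ← neg_smul]
    congr 1; simp; ring
  have hE := S.rootwt hdP he0 he1 he2
  have hF := S.flip.rootwt hdP hf0 hf1 hf2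
  refine ⟨d, hdP, fun j => ?_⟩
  fin_cases j
  · exact (hh 0).trans (by simp [bwt])
  · exact (hh 1).trans (by simp [bwt])
  · exact (hh 2).trans (by simp [bwt])
  · exact (hE 0).trans (congrArg (fun t : ℂ => t • rootE br e 0) (by simp [bwt] <;> norm_num))
  · exact (hE 1).trans (congrArg (fun t : ℂ => t • rootE br e 1) (by simp [bwt] <;> norm_num))
  · exact (hE 2).trans (congrArg (fun t : ℂ => t • rootE br e 2) (by simp [bwt] <;> norm_num))
  · exact (hE 3).trans (congrArg (fun t : ℂ => t • rootE br e 3) (by simp [bwt] <;> norm_num))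
  · exact (hE 4).trans (congrArg (fun t : ℂ => t • rootE br e 4) (by simp [bwt] <;> norm_num))
  · exact (hE 5).trans (congrArg (fun t : ℂ => t • rootE br e 5) (by simp [bwt] <;> norm_num))
  · exact (hE 6).trans (congrArg (fun t : ℂ => t • rootE br e 6) (by simp [bwt] <;> norm_num))
  · exact (hF 0).trans (congrArg (fun t : ℂ => t • rootE br f 0) (by simp [bwt] <;> norm_num))
  · exact (hF 1).trans (congrArg (fun t : ℂ => t • rootE br f 1) (by simp [bwt] <;> norm_num))
  · exact (hF 2).trans (congrArg (fun t : ℂ => t • rootE br f 2) (by simp [bwt] <;> norm_num))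
  · exact (hF 3).trans (congrArg (fun t : ℂ => t • rootE br f 3) (by simp [bwt] <;> norm_num))
  · exact (hF 4).trans (congrArg (fun t : ℂ => t • rootE br f 4) (by simp [bwt] <;> norm_num))
  · exact (hF 5).trans (congrArg (fun t : ℂ => t • rootE br f 5) (by simp [bwt] <;> norm_num))
  · exact (hF 6).trans (congrArg (fun t : ℂ => t • rootE br f 6) (by simp [bwt] <;> norm_num))

theorem h_indep (S : D21 a br P h e f) (ha : 1 + a ≠ 0) (hne : ∀ i, e i ≠ 0) :
    LinearIndependent ℂ h := by
  rw [Fintype.linearIndependent_iff]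
  intro g hg
  have key : ∀ j, br (∑ i, g i • h i) (e j) = 0 := by intro j; rw [hg]; simp
  have k0 := key 0
  have k1 := key 1
  have k2 := key 2
  simp only [Fin.sum_univ_three, map_add, map_smul, LinearMap.add_apply, LinearMap.smul_apply,
    S.he, smul_smul, ← add_smul, smul_eq_zero, hne, or_false] at k0 k1 k2
  simp at k0 k1 k2
  have g0 : g 0 = 0 := by
    have : (1 + a) * g 0 = 0 := by linear_combination 2 * k0 + k1 + k2
    simpa [ha] using this
  have g1 : g 1 = 0 := by linear_combination (k1 - g0) / 2
  have g2 : g 2 = 0 := by linear_combination (k2 - a * g0) / 2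
  intro i
  fin_cases i <;> assumption

theorem b_indep (S : D21 a br P h e f) (ha : 1 + a ≠ 0) (hne : ∀ i, e i ≠ 0)
    (hnf : ∀ i, f i ≠ 0) : LinearIndependent ℂ (bvec br h e f) := by
  obtain ⟨d, hd, hw⟩ := S.exists_d ha
  set r : Fin 14 → L := Fin.append (rootE br e) (rootE br f) with hr
  have hrd : ∀ j, br d (r j) = ((bwt (Fin.natAdd 3 j) : ℤ) : ℂ) • r j := by
    intro j
    have := hw (Fin.natAdd 3 j)
    have h2 : bvec br h e f (Fin.natAdd 3 j) = r j := Fin.append_right _ _ _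
    rwa [h2] at this
  have hrne : ∀ j, r j ≠ 0 := by
    intro j
    refine Fin.addCases (m := 7) (n := 7) (fun i => ?_) (fun i => ?_) j
    · rw [hr, Fin.append_left]; exact S.root_ne ha hne i
    · rw [hr, Fin.append_right]; exact S.flip.root_ne ha hnf i
  have hinj : Function.Injective (fun j : Fin 14 => ((bwt (Fin.natAdd 3 j) : ℤ) : ℂ)) := by
    intro i j hij
    have : bwt (Fin.natAdd 3 i) = bwt (Fin.natAdd 3 j) := by
      simpa using hij
    clear hij; revert this; revert i j; decide
  have hne0 : ∀ j : Fin 14, ((bwt (Fin.natAdd 3 j) : ℤ) : ℂ) ≠ 0 := by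
    intro j
    have : bwt (Fin.natAdd 3 j) ≠ 0 := by revert j; decide
    exact_mod_cast this
  have hri : LinearIndependent ℂ r :=
    Module.End.eigenvectors_linearIndependent' (br d) _ hinj r
      (fun j => ⟨Module.End.mem_eigenspace_iff.2 (hrd j), hrne j⟩)
  have hdis : Disjoint (Submodule.span ℂ (Set.range h)) (Submodule.span ℂ (Set.range r)) := by
    refine Disjoint.mono ?_ ?_ (Module.End.eigenspaces_iSupIndep (br d) 0)
    · rw [Submodule.span_le]
      rintro _ ⟨i, rfl⟩
      refine Module.End.mem_eigenspace_iff.2 ?_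
      have h1 := hw (Fin.castAdd 14 i)
      have h2 : bvec br h e f (Fin.castAdd 14 i) = h i := Fin.append_left _ _ _
      have h3 : bwt (Fin.castAdd 14 i) = 0 := by clear h1 h2; revert i; decide
      rw [h2, h3] at h1
      simpa using h1
    · rw [Submodule.span_le]
      rintro _ ⟨i, rfl⟩
      exact Submodule.mem_iSup_of_mem _ (Submodule.mem_iSup_of_mem (hne0 i)
        (Module.End.mem_eigenspace_iff.2 (hrd i)))
  have hs := (S.h_indep ha hne).sum_type hri hdis
  have hb : bvec br h e f ∘ (finSumFinEquiv (m := 3) (n := 14)) = Sum.elim h r := by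
    funext i
    rcases i with i | i
    · exact Fin.append_left _ _ _
    · exact Fin.append_right _ _ _
  rw [← hb] at hs
  exact (linearIndependent_equiv (finSumFinEquiv (m := 3) (n := 14))).1 hs

end D21

/-- Coefficients of `ad` of the generators `e 0, e 1, e 2, f 0, f 1, f 2` on the basis. -/
def adC (a : ℂ) : Fin 6 → Fin 17 → ℂ :=
  ![![0, 1, 1, 0, 1, 1, 0, 0, 1, 0, 1, 0, 0, -1, -a, 0, -(1 + a)],
    ![-1, -2, 0, -1, 0, 0, 0, -1, 0, 0, 0, 1, 0, -1, 0, -1, 0],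
    ![-a, 0, -2, -1, 0, 0, -1, 0, 0, 0, 0, 0, 1, 0, -1, -1, 0],
    ![0, -1, -1, 1, 0, 0, 1, a, 0, 1 + a, 0, 1, 1, 0, 0, 1, 0],
    ![1, 2, 0, 0, -1, 0, -1, 0, -1, 0, -1, 0, 0, 0, -1, 0, 0],
    ![a, 0, 2, 0, 0, -1, 0, -1, -1, 0, -1, 0, 0, -1, 0, 0, 0]]

/-- Target indices of `ad` of the generators on the basis. -/
def adS : Fin 6 → Fin 17 → Fin 17 :=
  ![![3, 3, 3, 0, 6, 7, 0, 0, 9, 0, 0, 0, 0, 11, 12, 0, 15],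
    ![4, 4, 4, 6, 0, 0, 0, 8, 0, 0, 0, 1, 0, 10, 0, 14, 0],
    ![5, 5, 5, 7, 0, 0, 8, 0, 0, 0, 0, 0, 2, 0, 10, 13, 0],
    ![10, 10, 10, 0, 0, 0, 4, 5, 0, 8, 0, 13, 14, 0, 0, 16, 0],
    ![11, 11, 11, 0, 1, 0, 3, 0, 7, 0, 13, 0, 0, 0, 15, 0, 0],
    ![12, 12, 12, 0, 0, 2, 0, 3, 6, 0, 14, 0, 0, 15, 0, 0, 0]]

/-- Basis index of each generator. -/
def genI : Fin 6 → Fin 17 := ![3, 4, 5, 10, 11, 12]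

/-- The Gram matrix. -/
noncomputable def gramM (a : ℂ) (j k : Fin 17) : ℂ :=
  (if k = (![1, 0, 0, 10, 11, 12, 13, 14, 15, 16, 3, 4, 5, 6, 7, 8, 9] : Fin 17 → Fin 17) j then
    (![-1, -1, -1, 1, -1, -(1 / a), -1, -1, 1, -(1 + a),
      -1, -1, -(1 / a), 1, 1, -1, -(1 + a)] : Fin 17 → ℂ) j else 0) +
  (if k = (![2, 1, 2, 0, 0, 0, 0, 0, 0, 0, 0, 0, 0, 0, 0, 0, 0] : Fin 17 → Fin 17) j then
    (![-1, -2, -(2 / a), 0, 0, 0, 0, 0, 0, 0, 0, 0, 0, 0, 0, 0, 0] : Fin 17 → ℂ) j else 0)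

theorem gram_symm (a : ℂ) (j k : Fin 17) :
    gramM a j k = (if bpar j && bpar k then (-1 : ℂ) else 1) * gramM a k j := by
  fin_cases j <;> fin_cases k <;> simp [gramM, bpar]

theorem gram_even (a : ℂ) (j k : Fin 17) (h : bpar j ≠ bpar k) : gramM a j k = 0 := by
  revert h
  fin_cases j <;> fin_cases k <;> simp [gramM, bpar]

theorem gram_wt (a : ℂ) (j k : Fin 17) (h : bwt j + bwt k ≠ 0) : gramM a j k = 0 := by
  have h1 : k ≠ (![1, 0, 0, 10, 11, 12, 13, 14, 15, 16, 3, 4, 5, 6, 7, 8, 9] :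
      Fin 17 → Fin 17) j := by
    revert j k; decide
  rw [gramM, if_neg h1, zero_add]
  split_ifs with h2
  · revert h h2
    fin_cases j <;> simp [bwt] <;> rintro h2 rfl <;> exact (h2 rfl).elim
  · rfl

theorem adC_wt (a : ℂ) (t : Fin 6) (j : Fin 17) :
    adC a t j = 0 ∨ bwt (adS t j) = bwt (genI t) + bwt j := by
  fin_cases t <;> fin_cases j <;> first | exact Or.inr (by decide) | exact Or.inl rfl

theorem inv_check (a : ℂ) (ha : a ≠ 0) (t : Fin 6) (j k : Fin 17) :
    (if bpar (genI t) && bpar j then (1 : ℂ) else -1) * adC a t j * gramM a (adS t j) k =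
      adC a t k * gramM a j (adS t k) := by
  by_cases hw : bwt (genI t) + bwt j + bwt k = 0
  · fin_cases t <;> fin_cases j <;> fin_cases k <;>
      first
      | exact absurd hw (by decide)
      | (simp [gramM, bpar, genI, adC, adS, ha] <;> field_simp)
  · have h1 : adC a t j = 0 ∨ gramM a (adS t j) k = 0 := by
      rcases adC_wt a t j with h | h
      · exact Or.inl h
      · exact Or.inr (gram_wt a _ _ (by rw [h]; exact hw))
    have h2 : adC a t k = 0 ∨ gramM a j (adS t k) = 0 := by
      rcases adC_wt a t k with h | h
      · exact Or.inl h
      · refine Or.inr (gram_wt a _ _ ?_)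
        rw [h]
        intro h'
        apply hw
        rw [← h']
        ring
    have h3 : adC a t j * gramM a (adS t j) k = 0 := by simpa using h1
    have h4 : adC a t k * gramM a j (adS t k) = 0 := by simpa using h2
    rw [mul_assoc, h3, h4, mul_zero]

namespace D21

variable {L : Type*} [AddCommGroup L] [Module ℂ L] {a : ℂ}
    {br : L →ₗ[ℂ] L →ₗ[ℂ] L} {P : Bool → Submodule ℂ L} {h e f : Fin 3 → L}

theorem smul_one' {x y : L} (h : x = y) : x = (1 : ℂ) • y := by rw [one_smul, h]
theorem smul_neg' {x y : L} (h : x = -y) : x = (-1 : ℂ) • y := by rw [neg_one_smul, h]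
theorem smul_zero' {x y : L} (h : x = 0) : x = (0 : ℂ) • y := by rw [zero_smul, h]

theorem eh' (S : D21 a br P h e f) (i j : Fin 3) (c : ℂ)
    (hc : -!![(0 : ℂ), 1, a; -1, 2, 0; -1, 0, 2] j i = c) :
    br (e i) (h j) = c • e i := by
  rw [S.eh, hc]

theorem fh' (S : D21 a br P h e f) (i j : Fin 3) (c : ℂ)
    (hc : !![(0 : ℂ), 1, a; -1, 2, 0; -1, 0, 2] j i = c) :
    br (f i) (h j) = c • f i := by
  have := S.flip.eh i j
  rw [Pi.neg_apply, map_neg, neg_smul, neg_inj] at this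
  rw [this, hc]

theorem e0F {x y : L} (hx : br ((![-e 0, e 1, e 2] : Fin 3 → L) 0) x = y) :
    br (e 0) x = - y := by
  rw [← hx]; simp

theorem tab_e0 (S : D21 a br P h e f) (hY : br (f 1) (f 2) = 0)
    (Z : ∀ j, (∀ k, bwt k ≠ 1 + bwt j) → br (e 0) (bvec br h e f j) = 0) (j : Fin 17) :
    br (e 0) (bvec br h e f j) = adC a 0 j • bvec br h e f (adS 0 j) := by
  have F := S.flip
  fin_cases j
  all_goals try exact smul_zero' (Z _ (by decide))
  · exact S.eh' 0 0 0 (by simp)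
  · exact S.eh' 0 1 1 (by simp)
  · exact S.eh' 0 2 1 (by simp)
  · exact smul_one' rfl
  · exact smul_one' rfl
  · exact smul_one' rfl
  · exact smul_one' (S.ef 0 0)
  · exact smul_neg' (e0F F.f0E3)
  · exact (e0F F.f0E4).trans (neg_smul _ _).symm
  · refine (e0F F.f0E6).trans ?_
    rw [hY]
    simp only [map_zero, sub_zero]
    exact (neg_smul _ _).symm

theorem tab_e1 (S : D21 a br P h e f) (hX : br (e 1) (e 2) = 0)
    (Z : ∀ j, (∀ k, bwt k ≠ 10 + bwt j) → br (e 1) (bvec br h e f j) = 0) (j : Fin 17) :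
    br (e 1) (bvec br h e f j) = adC a 1 j • bvec br h e f (adS 1 j) := by
  have F := S.flip
  fin_cases j
  all_goals try exact smul_zero' (Z _ (by decide))
  · exact S.eh' 1 0 (-1) (by simp)
  · exact S.eh' 1 1 (-2) (by simp)
  · exact S.eh' 1 2 0 (by simp)
  · exact smul_neg' (S.ske S.e1 S.e0)
  · exact smul_neg' (S.e1E4 hX)
  · exact smul_one' (S.ef 1 1)
  · exact smul_neg' F.f1E3
  · exact smul_neg' F.f1E5

theorem tab_e2 (S : D21 a br P h e f)
    (Z : ∀ j, (∀ k, bwt k ≠ 100 + bwt j) → br (e 2) (bvec br h e f j) = 0) (j : Fin 17) :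
    br (e 2) (bvec br h e f j) = adC a 2 j • bvec br h e f (adS 2 j) := by
  have F := S.flip
  fin_cases j
  all_goals try exact smul_zero' (Z _ (by decide))
  · exact S.eh' 2 0 (-a) (by simp)
  · exact S.eh' 2 1 0 (by simp)
  · exact S.eh' 2 2 (-2) (by simp)
  · exact smul_neg' (S.ske S.e2 S.e0)
  · exact smul_neg' (S.ske S.e2 (S.rootP 3))
  · exact smul_one' (S.ef 2 2)
  · exact smul_neg' F.f2E4
  · exact smul_neg' F.f2E5

theorem tab_f0 (S : D21 a br P h e f) (hX : br (e 1) (e 2) = 0)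
    (Z : ∀ j, (∀ k, bwt k ≠ -1 + bwt j) → br (f 0) (bvec br h e f j) = 0) (j : Fin 17) :
    br (f 0) (bvec br h e f j) = adC a 3 j • bvec br h e f (adS 3 j) := by
  fin_cases j
  all_goals try exact smul_zero' (Z _ (by decide))
  · exact S.fh' 0 0 0 (by simp)
  · exact S.fh' 0 1 (-1) (by simp)
  · exact S.fh' 0 2 (-1) (by simp)
  · exact smul_one' (S.fe 0 0)
  · exact smul_one' S.f0E3
  · exact S.f0E4
  · refine S.f0E6.trans ?_
    rw [hX]
    simp only [map_zero, sub_zero]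
    rfl
  · exact smul_one' rfl
  · exact smul_one' rfl
  · exact smul_one' rfl

theorem tab_f1 (S : D21 a br P h e f) (hY : br (f 1) (f 2) = 0)
    (Z : ∀ j, (∀ k, bwt k ≠ -10 + bwt j) → br (f 1) (bvec br h e f j) = 0) (j : Fin 17) :
    br (f 1) (bvec br h e f j) = adC a 4 j • bvec br h e f (adS 4 j) := by
  have F := S.flip
  fin_cases j
  all_goals try exact smul_zero' (Z _ (by decide))
  · exact S.fh' 1 0 1 (by simp)
  · exact S.fh' 1 1 2 (by simp)
  · exact S.fh' 1 2 0 (by simp)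
  · exact smul_neg' (S.fe 1 1)
  · exact smul_neg' S.f1E3
  · exact smul_neg' S.f1E5
  · exact smul_neg' (S.ske S.f1 S.f0)
  · exact smul_neg' (F.e1E4 hY)

theorem tab_f2 (S : D21 a br P h e f)
    (Z : ∀ j, (∀ k, bwt k ≠ -100 + bwt j) → br (f 2) (bvec br h e f j) = 0) (j : Fin 17) :
    br (f 2) (bvec br h e f j) = adC a 5 j • bvec br h e f (adS 5 j) := by
  have F := S.flip
  fin_cases j
  all_goals try exact smul_zero' (Z _ (by decide))
  · exact S.fh' 2 0 a (by simp)
  · exact S.fh' 2 1 0 (by simp)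
  · exact S.fh' 2 2 2 (by simp)
  · exact smul_neg' (S.fe 2 2)
  · exact smul_neg' S.f2E4
  · exact smul_neg' S.f2E5
  · exact smul_neg' (S.ske S.f2 S.f0)
  · exact smul_neg' (S.ske S.f2 (F.rootP 3))

/-- If the basis vectors form a basis, the whole table of the adjoint action follows. -/
theorem tab (S : D21 a br P h e f) (ha : 1 + a ≠ 0) (b : Module.Basis (Fin 17) ℂ L)
    (hb : ∀ j, b j = bvec br h e f j) (t : Fin 6) (j : Fin 17) :
    br (b (genI t)) (b j) = adC a t j • b (adS t j) := by
  obtain ⟨d, hd, hw⟩ := S.exists_d ha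
  have hZ : ∀ (x : L) (n : ℤ), br d x = (n : ℂ) • x → (∀ k, bwt k ≠ n) → x = 0 := by
    intro x n hx hn
    apply b.ext_elem
    intro k
    have h1 : b.repr (br d x) k = (bwt k : ℂ) * b.repr x k := by
      conv_lhs => rw [← b.sum_repr x]
      rw [map_sum]
      have : ∀ i, br d (b.repr x i • b i) = (b.repr x i * (bwt i : ℂ)) • b i := by
        intro i
        rw [map_smul, hb, hw, smul_smul]
      simp only [this]
      rw [b.repr_sum_self]
      ring
    rw [hx] at h1
    simp only [map_smul, Finsupp.smul_apply, smul_eq_mul] at h1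
    have h2 : ((bwt k : ℂ) - n) * b.repr x k = 0 := by linear_combination -h1
    have h3 : ((bwt k : ℂ) - n) ≠ 0 := by
      rw [sub_ne_zero]; exact_mod_cast hn k
    simpa [h3] using h2
  have Zb : ∀ i j, (∀ k, bwt k ≠ bwt i + bwt j) →
      br (bvec br h e f i) (bvec br h e f j) = 0 := by
    intro i j hij
    refine hZ _ (bwt i + bwt j) ?_ hij
    exact S.wadd hd (S.bP i) (hw i) (hw j) (by push_cast; rfl)
  have hX : br (e 1) (e 2) = 0 := Zb 4 5 (by decide)
  have hY : br (f 1) (f 2) = 0 := Zb 11 12 (by decide)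
  simp only [hb]
  fin_cases t
  · exact S.tab_e0 hY (Zb 3) j
  · exact S.tab_e1 hX (Zb 4) j
  · exact S.tab_e2 (Zb 5) j
  · exact S.tab_f0 hX (Zb 10) j
  · exact S.tab_f1 hY (Zb 11) j
  · exact S.tab_f2 (Zb 12) j

/-- Elements with respect to which a form is invariant are closed under the bracket. -/
theorem inv_closed (S : D21 a br P h e f) (b : Module.Basis (Fin 17) ℂ L)
    (hb : ∀ j, b j = bvec br h e f j) (B : L →ₗ[ℂ] L →ₗ[ℂ] ℂ) {p q : Bool} {y₁ y₂ : L}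
    (hp : y₁ ∈ P p) (hq : y₂ ∈ P q)
    (h1 : ∀ x z, B (br x y₁) z = B x (br y₁ z)) (h2 : ∀ x z, B (br x y₂) z = B x (br y₂ z)) :
    ∀ x z, B (br x (br y₁ y₂)) z = B x (br (br y₁ y₂) z) := by
  intro x z
  have key : B.flip z ∘ₗ br.flip (br y₁ y₂) = B.flip (br (br y₁ y₂) z) := by
    apply b.ext
    intro j
    have hj := S.bP j
    rw [← hb] at hj
    simp only [LinearMap.comp_apply, LinearMap.flip_apply]
    generalize bpar j = r at hj
    have k1 := S.jac _ _ _ hj _ hp y₂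
    have k2 := S.skew _ _ _ hp _ (S.brP _ _ _ hj _ hq)
    have k3 := S.jac _ _ _ hp _ hq z
    have k3' : br (br y₁ y₂) z = br y₁ (br y₂ z) -
        (if p && q then (-1 : ℂ) else 1) • br y₂ (br y₁ z) := by rw [k3]; abel
    rw [k1, k2, k3']
    simp only [map_add, map_smul, map_sub, LinearMap.add_apply, LinearMap.smul_apply, h1, h2]
    cases p <;> cases q <;> cases r <;> simp <;> ring
  exact LinearMap.congr_fun key x

theorem mem_parity (S : D21 a br P h e f) (hP : IsCompl (P false) (P true))
    (b : Module.Basis (Fin 17) ℂ L) (hb : ∀ j, b j = bvec br h e f j) {p : Bool} {x : L}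
    (hx : x ∈ P p) (j : Fin 17) (hj : bpar j ≠ p) : b.repr x j = 0 := by
  set u : L := ∑ i, if bpar i = p then b.repr x i • b i else 0 with hu
  set v : L := ∑ i, if bpar i = p then 0 else b.repr x i • b i with hv
  have huv : u + v = x := by
    rw [hu, hv, ← Finset.sum_add_distrib]
    conv_rhs => rw [← b.sum_repr x]
    refine Finset.sum_congr rfl fun i _ => ?_
    split_ifs <;> simp
  have hbP : ∀ i, b i ∈ P (bpar i) := fun i => by rw [hb]; exact S.bP i
  have hup : u ∈ P p := by
    refine Submodule.sum_mem _ fun i _ => ?_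
    split_ifs with hi
    · rw [← hi]; exact Submodule.smul_mem _ _ (hbP i)
    · exact zero_mem _
  have hvp : v ∈ P (!p) := by
    refine Submodule.sum_mem _ fun i _ => ?_
    split_ifs with hi
    · exact zero_mem _
    · have : bpar i = !p := by
        revert hi; generalize bpar i = r; cases r <;> cases p <;> simp
      rw [← this]; exact Submodule.smul_mem _ _ (hbP i)
  have hvp' : v ∈ P p := by
    have : v = x - u := by rw [← huv]; abel
    rw [this]; exact sub_mem hx hup
  have hv0 : v = 0 := by
    cases p
    · exact Submodule.disjoint_def.1 hP.disjoint v hvp' hvp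
    · exact Submodule.disjoint_def.1 hP.disjoint v hvp hvp'
  have h4 : v = ∑ i, (if bpar i = p then 0 else b.repr x i) • b i := by
    rw [hv]
    refine Finset.sum_congr rfl fun i _ => ?_
    split_ifs <;> simp
  have h5 : b.repr v j = (if bpar j = p then 0 else b.repr x j) := by
    rw [h4, b.repr_sum_self]
  rw [hv0, if_neg hj] at h5
  simpa using h5.symm

end D21

theorem gram_rat (a : ℚ) (j k : Fin 17) :
    gramM (a : ℂ) j k ∈ (Rat.castHom ℂ).fieldRange := by
  have ha : (a : ℂ) ∈ (Rat.castHom ℂ).fieldRange := ⟨a, rfl⟩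
  have h1 : (1 : ℂ) ∈ (Rat.castHom ℂ).fieldRange := one_mem _
  have h2 : (2 : ℂ) ∈ (Rat.castHom ℂ).fieldRange := ⟨2, by simp⟩
  have h3 := neg_mem h1
  have h4 := neg_mem (div_mem h1 ha)
  have h5 := neg_mem (div_mem h2 ha)
  have h6 := neg_mem (add_mem h1 ha)
  have h0 : (0 : ℂ) ∈ (Rat.castHom ℂ).fieldRange := zero_mem _
  have h7 := neg_mem h2
  refine add_mem ?_ ?_
  · split_ifs
    · fin_cases j <;> assumption
    · exact h0
  · split_ifs
    · fin_cases j <;> assumption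
    · exact h0

set_option maxHeartbeats 4000000

/-- Let `g = D(2,1;a)` with `a ∈ ℚ \ {0, −1}`, with Chevalley-type
generators `hᵢ, eᵢ, fᵢ` (`i = 1,2,3`) subject to `[hᵢ,hⱼ] = 0`, `[e₁,e₁] = [f₁,f₁] = 0`,
`[hᵢ,eⱼ] = aᵢⱼ eⱼ`, `[hᵢ,fⱼ] = −aᵢⱼ fⱼ`, `[eᵢ,fⱼ] = δᵢⱼ hᵢ`, where the Cartan matrix has
rows `(0,1,a), (−1,2,0), (−1,0,2)`.  Then the bilinear form determined by
`(e₁,f₁) = 1`, `(e₂,f₂) = −1`, `(e₃,f₃) = −1/a`, `(h₁,h₂) = −1`, `(h₁,h₃) = −1`,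
`(h₂,h₂) = −2`, `(h₃,h₃) = −2/a` (all other pairings of generators zero), extended by
invariance, is an even supersymmetric invariant bilinear form on `g` taking values in `ℚ`
on the Chevalley basis. -/
theorem statement18 (a : ℚ) (ha0 : a ≠ 0) (ham1 : a ≠ -1)
    {L : Type*} [AddCommGroup L] [Module ℂ L] [FiniteDimensional ℂ L]
    (hdim : Module.finrank ℂ L = 17)
    (br : L →ₗ[ℂ] L →ₗ[ℂ] L)       -- the Lie superbracket
    (P : Bool → Submodule ℂ L)      -- parity decomposition
    (hPcompl : IsCompl (P false) (P true))
    (hbrP : ∀ (p q : Bool), ∀ x ∈ P p, ∀ y ∈ P q, br x y ∈ P (xor p q))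
    (hskew : ∀ (p q : Bool), ∀ x ∈ P p, ∀ y ∈ P q,
      br x y = (if p && q then (1 : ℂ) else -1) • br y x)
    (hjac : ∀ (p q : Bool), ∀ x ∈ P p, ∀ y ∈ P q, ∀ z : L,
      br x (br y z) = br (br x y) z + (if p && q then (-1 : ℂ) else 1) • br y (br x z))
    -- the generators (index 0 here is index 1 of the paper, etc.)
    (h e f : Fin 3 → L)
    -- parities: e₁, f₁ are odd, all other generators even
    (hhP : ∀ i, h i ∈ P false)
    (heP0 : e 0 ∈ P true) (hfP0 : f 0 ∈ P true)
    (heP : ∀ i, i ≠ 0 → e i ∈ P false) (hfP : ∀ i, i ≠ 0 → f i ∈ P false)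
    -- the defining relations, with Cartan matrix (0,1,a; −1,2,0; −1,0,2)
    (hhh : ∀ i j, br (h i) (h j) = 0)
    (hee : br (e 0) (e 0) = 0) (hff : br (f 0) (f 0) = 0)
    (hhe : ∀ i j, br (h i) (e j) =
      (!![(0 : ℂ), 1, (a : ℂ); -1, 2, 0; -1, 0, 2] i j) • e j)
    (hhf : ∀ i j, br (h i) (f j) =
      -((!![(0 : ℂ), 1, (a : ℂ); -1, 2, 0; -1, 0, 2] i j) • f j))
    (hef : ∀ i j, br (e i) (f j) = if i = j then h i else 0)
    -- g is generated by the hᵢ, eᵢ, fᵢ as a Lie superalgebra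
    (hgen : ∀ W : Submodule ℂ L, (∀ i, h i ∈ W) → (∀ i, e i ∈ W) → (∀ i, f i ∈ W) →
      (∀ x ∈ W, ∀ y ∈ W, br x y ∈ W) → W = ⊤) :
    ∃ B : L →ₗ[ℂ] L →ₗ[ℂ] ℂ,
      -- B is invariant ...
      (∀ x y z : L, B (br x y) z = B x (br y z)) ∧
      -- ... supersymmetric ...
      (∀ (p q : Bool), ∀ x ∈ P p, ∀ y ∈ P q,
        B x y = (if p && q then (-1 : ℂ) else 1) * B y x) ∧
      -- ... even ...
      (∀ x ∈ P false, ∀ y ∈ P true, B x y = 0) ∧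
      -- ... takes the prescribed values on the generators ...
      B (e 0) (f 0) = 1 ∧ B (e 1) (f 1) = -1 ∧ B (e 2) (f 2) = -(1 / (a : ℂ)) ∧
      B (h 0) (h 1) = -1 ∧ B (h 0) (h 2) = -1 ∧
      B (h 1) (h 1) = -2 ∧ B (h 2) (h 2) = -(2 / (a : ℂ)) ∧
      -- ... all remaining pairings of generators vanish ...
      B (h 0) (h 0) = 0 ∧ B (h 1) (h 2) = 0 ∧
      (∀ i j, B (h i) (e j) = 0) ∧ (∀ i j, B (h i) (f j) = 0) ∧
      (∀ i j, B (e i) (e j) = 0) ∧ (∀ i j, B (f i) (f j) = 0) ∧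
      (∀ i j, i ≠ j → B (e i) (f j) = 0) ∧
      -- ... and B takes rational values on the Chevalley basis
      (∀ x ∈ chevalleyBasisD21a br a h e f, ∀ y ∈ chevalleyBasisD21a br a h e f,
        ∃ q : ℚ, B x y = (q : ℂ)) := by
  have haC : (a : ℂ) ≠ 0 := by exact_mod_cast ha0
  have ha1 : 1 + (a : ℂ) ≠ 0 := by
    intro h0
    apply ham1
    have : (1 + a : ℚ) = 0 := by exact_mod_cast h0
    linarith
  have S : D21 (a : ℂ) br P h e f :=
    { brP := hbrP, skew := hskew, jac := hjac, hP := hhP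
      eP := fun i => by
        by_cases hi : i = 0
        · subst hi; simpa using heP0
        · simpa [hi] using heP i hi
      fP := fun i => by
        by_cases hi : i = 0
        · subst hi; simpa using hfP0
        · simpa [hi] using hfP i hi
      hh := hhh, ee := hee, ff := hff, he := hhe, hf := hhf, ef := hef }
  -- the generators do not vanish
  have hh0 : h 0 ≠ 0 := by
    intro h0
    have e1 : e 1 = 0 := by simpa [h0] using (hhe 0 1).symm
    have e2 : e 2 = 0 := by simpa [h0, haC] using (hhe 0 2).symm
    have f1 : f 1 = 0 := by simpa [h0] using (hhf 0 1).symm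
    have f2 : f 2 = 0 := by simpa [h0, haC] using (hhf 0 2).symm
    have h1 : h 1 = 0 := by simpa [e1] using (hef 1 1).symm
    have h2 : h 2 = 0 := by simpa [e2] using (hef 2 2).symm
    have e0 : e 0 = 0 := by simpa [h1] using (hhe 1 0).symm
    have f0 : f 0 = 0 := by simpa [h1] using (hhf 1 0).symm
    have := hgen ⊥ (fun i => by fin_cases i <;> simpa) (fun i => by fin_cases i <;> simpa)
      (fun i => by fin_cases i <;> simpa) (fun x hx y hy => by rw [(Submodule.mem_bot ℂ).1 hx]; simp)
    have h3 : Module.finrank ℂ (⊤ : Submodule ℂ L) = 17 := by rw [finrank_top, hdim]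
    rw [← this] at h3
    simp at h3
  have he0 : e 0 ≠ 0 := fun h0 => hh0 (by simpa [h0] using (hef 0 0).symm)
  have hh1 : h 1 ≠ 0 := fun h0 => he0 (by simpa [h0] using (hhe 1 0).symm)
  have hh2 : h 2 ≠ 0 := fun h0 => he0 (by simpa [h0] using (hhe 2 0).symm)
  have hne : ∀ i, e i ≠ 0 := by
    intro i
    fin_cases i
    · exact he0
    · exact fun h0 => hh1 (by simpa [show e 1 = 0 from h0] using (hef 1 1).symm)
    · exact fun h0 => hh2 (by simpa [show e 2 = 0 from h0] using (hef 2 2).symm)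
  have hnf : ∀ i, f i ≠ 0 := by
    intro i
    fin_cases i
    · exact fun h0 => hh0 (by simpa [show f 0 = 0 from h0] using (hef 0 0).symm)
    · exact fun h0 => hh1 (by simpa [show f 1 = 0 from h0] using (hef 1 1).symm)
    · exact fun h0 => hh2 (by simpa [show f 2 = 0 from h0] using (hef 2 2).symm)
  -- the basis
  obtain ⟨b, hb⟩ : ∃ b : Module.Basis (Fin 17) ℂ L, ∀ j, b j = bvec br h e f j :=
    ⟨basisOfLinearIndependentOfCardEqFinrank (S.b_indep ha1 hne hnf) (by simp [hdim]),
      fun j => by simp⟩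
  have hbP : ∀ j, b j ∈ P (bpar j) := fun j => by rw [hb]; exact S.bP j
  have htab := S.tab ha1 b hb
  -- the form
  obtain ⟨B, hB⟩ : ∃ B : L →ₗ[ℂ] L →ₗ[ℂ] ℂ, ∀ j k, B (b j) (b k) = gramM (a : ℂ) j k :=
    ⟨b.constr ℂ (fun j => b.constr ℂ (fun k => gramM (a : ℂ) j k)), fun j k => by simp⟩
  have hBsum : ∀ x y, B x y = ∑ j, ∑ k, b.repr x j * (b.repr y k * gramM (a : ℂ) j k) := by
    intro x y
    conv_lhs => rw [← b.sum_repr x, ← b.sum_repr y]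
    simp only [map_sum, LinearMap.sum_apply, map_smul, LinearMap.smul_apply, hB, smul_eq_mul]
    rw [Finset.sum_comm]
    refine Finset.sum_congr rfl fun j _ => ?_
    rw [Finset.mul_sum]
    refine Finset.sum_congr rfl fun k _ => ?_
    ring
  -- invariance with respect to the generators
  have hgenInv : ∀ t x z, B (br x (b (genI t))) z = B x (br (b (genI t)) z) := by
    intro t x z
    have key : B ∘ₗ br.flip (b (genI t)) = (B.compl₂ (br (b (genI t)))) := by
      apply b.ext
      intro j
      apply b.ext
      intro k
      simp only [LinearMap.comp_apply, LinearMap.flip_apply, LinearMap.compl₂_apply]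
      rw [hskew _ _ _ (hbP j) _ (hbP (genI t)), htab, htab]
      have := inv_check (a : ℂ) haC t j k
      rw [Bool.and_comm] at this
      simp only [map_smul, LinearMap.smul_apply, hB, smul_eq_mul]
      rw [← this, mul_assoc]
    exact LinearMap.congr_fun (LinearMap.congr_fun key x) z
  have ie : ∀ i x z, B (br x (e i)) z = B x (br (e i) z) := by
    intro i
    fin_cases i
    · have := hgenInv 0; rwa [hb] at this
    · have := hgenInv 1; rwa [hb] at this
    · have := hgenInv 2; rwa [hb] at this
  have jf : ∀ i x z, B (br x (f i)) z = B x (br (f i) z) := by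
    intro i
    fin_cases i
    · have := hgenInv 3; rwa [hb] at this
    · have := hgenInv 4; rwa [hb] at this
    · have := hgenInv 5; rwa [hb] at this
  have ih : ∀ i x z, B (br x (h i)) z = B x (br (h i) z) := by
    intro i
    have := S.inv_closed b hb B (S.eP i) (S.fP i) (ie i) (jf i)
    rw [hef, if_pos rfl] at this
    exact this
  have hroot : ∀ g : Fin 3 → L, (∀ i, g i ∈ P (decide (i = 0))) →
      (∀ i x z, B (br x (g i)) z = B x (br (g i) z)) →
      (∀ k, rootE br g k ∈ P (![true, false, false, true, true, true, false] k)) →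
      ∀ k x z, B (br x (rootE br g k)) z = B x (br (rootE br g k) z) := by
    intro g hg hi hr k
    have h3 := S.inv_closed b hb B (hg 0) (hg 1) (hi 0) (hi 1)
    have h4 := S.inv_closed b hb B (hg 0) (hg 2) (hi 0) (hi 2)
    have h5 := S.inv_closed b hb B (hr 3) (hg 2) h3 (hi 2)
    have h6 := S.inv_closed b hb B (hg 0) (hr 5) (hi 0) h5
    fin_cases k
    · exact hi 0
    · exact hi 1
    · exact hi 2
    · exact h3
    · exact h4
    · exact h5
    · exact h6
  have hbInv : ∀ j x z, B (br x (b j)) z = B x (br (b j) z) := by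
    intro j
    rw [hb]
    refine Fin.addCases (m := 3) (n := 14) (fun i => ?_) (fun i => ?_) j
    · rw [show bvec br h e f (Fin.castAdd 14 i) = h i from Fin.append_left _ _ _]
      exact ih i
    · rw [show bvec br h e f (Fin.natAdd 3 i) = Fin.append (rootE br e) (rootE br f) i from
        Fin.append_right _ _ _]
      refine Fin.addCases (m := 7) (n := 7) (fun k => ?_) (fun k => ?_) i
      · rw [Fin.append_left]; exact hroot e S.eP ie S.rootP k
      · rw [Fin.append_right]; exact hroot f S.fP jf S.flip.rootP k
  have hInv : ∀ x y z : L, B (br x y) z = B x (br y z) := by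
    intro x y z
    have key : B.flip z ∘ₗ br x = B x ∘ₗ br.flip z := by
      apply b.ext
      intro j
      exact hbInv j x z
    exact LinearMap.congr_fun key y
  have hsymm : ∀ (p q : Bool), ∀ x ∈ P p, ∀ y ∈ P q,
      B x y = (if p && q then (-1 : ℂ) else 1) * B y x := by
    intro p q x hx y hy
    rw [hBsum, hBsum, Finset.sum_comm, Finset.mul_sum]
    refine Finset.sum_congr rfl fun k _ => ?_
    rw [Finset.mul_sum]
    refine Finset.sum_congr rfl fun j _ => ?_
    by_cases hj : bpar j = p
    · by_cases hk : bpar k = q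
      · rw [gram_symm, hj, hk]; ring
      · rw [S.mem_parity hPcompl b hb hy k hk]; ring
    · rw [S.mem_parity hPcompl b hb hx j hj]; ring
  have heven : ∀ x ∈ P false, ∀ y ∈ P true, B x y = 0 := by
    intro x hx y hy
    rw [hBsum]
    refine Finset.sum_eq_zero fun j _ => Finset.sum_eq_zero fun k _ => ?_
    by_cases hj : bpar j = false
    · by_cases hk : bpar k = true
      · rw [gram_even _ j k (by rw [hj, hk]; decide)]; ring
      · rw [S.mem_parity hPcompl b hb hy k hk]; ring
    · rw [S.mem_parity hPcompl b hb hx j hj]; ring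
  have hv : ∀ j k, B (bvec br h e f j) (bvec br h e f k) = gramM (a : ℂ) j k := by
    intro j k; rw [← hb, ← hb, hB]
  -- rationality
  have hV : ∀ x ∈ chevalleyBasisD21a br a h e f, ∀ j,
      b.repr x j ∈ (Rat.castHom ℂ).fieldRange := by
    have haK : (a : ℂ) ∈ (Rat.castHom ℂ).fieldRange := ⟨a, rfl⟩
    have h1K : (1 : ℂ) ∈ (Rat.castHom ℂ).fieldRange := one_mem _
    have h2K : (2 : ℂ) ∈ (Rat.castHom ℂ).fieldRange := ⟨2, by simp⟩
    have hcK := div_mem h1K (add_mem h1K haK)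
    have V0 : ∀ i j, b.repr (bvec br h e f i) j ∈ (Rat.castHom ℂ).fieldRange := by
      intro i j
      rw [← hb, b.repr_self_apply]
      split_ifs
      · exact one_mem _
      · exact zero_mem _
    have Vs : ∀ (c : ℂ) (x : L), c ∈ (Rat.castHom ℂ).fieldRange →
        (∀ j, b.repr x j ∈ (Rat.castHom ℂ).fieldRange) →
        ∀ j, b.repr (c • x) j ∈ (Rat.castHom ℂ).fieldRange := by
      intro c x hc hx j
      simpa using mul_mem hc (hx j)
    have Vsub : ∀ (x y : L),
        (∀ j, b.repr x j ∈ (Rat.castHom ℂ).fieldRange) →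
        (∀ j, b.repr y j ∈ (Rat.castHom ℂ).fieldRange) →
        ∀ j, b.repr (x - y) j ∈ (Rat.castHom ℂ).fieldRange := by
      intro x y hx hy j
      simpa using sub_mem (hx j) (hy j)
    have Vneg : ∀ (x : L), (∀ j, b.repr x j ∈ (Rat.castHom ℂ).fieldRange) →
        ∀ j, b.repr (-x) j ∈ (Rat.castHom ℂ).fieldRange := by
      intro x hx j
      simpa using neg_mem (hx j)
    have F3 : br (f 1) (f 0) = - bvec br h e f 13 := S.ske S.f1 S.f0
    have F4 : br (f 2) (f 0) = - bvec br h e f 14 := S.ske S.f2 S.f0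
    have F5 : br (f 2) (br (f 1) (f 0)) = bvec br h e f 15 := by
      rw [F3, map_neg, S.ske S.f2 (S.bP 13), neg_neg]; rfl
    have F6 : br (br (f 2) (br (f 1) (f 0))) (f 0) = bvec br h e f 16 := by
      rw [F5]; exact S.sko (S.bP 15) S.f0
    intro x hx
    rw [chevalleyBasisD21a, F6, F5, F4, F3] at hx
    simp only [Set.mem_insert_iff, Set.mem_singleton_iff] at hx
    rcases hx with rfl | rfl | rfl | rfl | rfl | rfl | rfl | rfl | rfl | rfl | rfl | rfl | rfl |
      rfl | rfl | rfl | rfl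
    · exact V0 0
    · exact Vs _ _ hcK (Vsub _ _ (Vsub _ _ (Vs _ _ h2K (V0 0)) (V0 1)) (Vs _ _ haK (V0 2)))
    · exact V0 2
    · exact V0 3
    · exact V0 4
    · exact V0 5
    · exact V0 10
    · exact V0 11
    · exact V0 12
    · exact V0 6
    · exact V0 7
    · exact V0 8
    · exact Vs _ _ hcK (V0 9)
    · exact Vneg _ (V0 13)
    · exact Vneg _ (V0 14)
    · exact V0 15
    · exact Vneg _ (Vs _ _ hcK (V0 16))
  refine ⟨B, hInv, hsymm, heven, ?_, ?_, ?_, ?_, ?_, ?_, ?_, ?_, ?_, ?_, ?_, ?_, ?_, ?_, ?_⟩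
  · exact (hv 3 10).trans (by simp [gramM])
  · exact (hv 4 11).trans (by simp [gramM])
  · exact (hv 5 12).trans (by simp [gramM])
  · exact (hv 0 1).trans (by simp [gramM])
  · exact (hv 0 2).trans (by simp [gramM])
  · exact (hv 1 1).trans (by simp [gramM])
  · exact (hv 2 2).trans (by simp [gramM])
  · exact (hv 0 0).trans (by simp [gramM])
  · exact (hv 1 2).trans (by simp [gramM])
  · intro i j
    have h1 : bwt (Fin.castAdd 14 i) + bwt (Fin.natAdd 3 (Fin.castAdd 11 j)) ≠ 0 := by
      revert i j; decide
    have h2 := (hv _ _).trans (gram_wt (a : ℂ) _ _ h1)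
    fin_cases i <;> fin_cases j <;> exact h2
  · intro i j
    have h1 : bwt (Fin.castAdd 14 i) + bwt (Fin.natAdd 10 (Fin.castAdd 4 j)) ≠ 0 := by
      revert i j; decide
    have h2 := (hv _ _).trans (gram_wt (a : ℂ) _ _ h1)
    fin_cases i <;> fin_cases j <;> exact h2
  · intro i j
    have h1 : bwt (Fin.natAdd 3 (Fin.castAdd 11 i)) + bwt (Fin.natAdd 3 (Fin.castAdd 11 j)) ≠ 0 := by
      revert i j; decide
    have h2 := (hv _ _).trans (gram_wt (a : ℂ) _ _ h1)
    fin_cases i <;> fin_cases j <;> exact h2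
  · intro i j
    have h1 : bwt (Fin.natAdd 10 (Fin.castAdd 4 i)) + bwt (Fin.natAdd 10 (Fin.castAdd 4 j)) ≠ 0 := by
      revert i j; decide
    have h2 := (hv _ _).trans (gram_wt (a : ℂ) _ _ h1)
    fin_cases i <;> fin_cases j <;> exact h2
  · intro i j hij
    have h1 : bwt (Fin.natAdd 3 (Fin.castAdd 11 i)) + bwt (Fin.natAdd 10 (Fin.castAdd 4 j)) ≠ 0 := by
      revert i j; decide
    have h2 := (hv _ _).trans (gram_wt (a : ℂ) _ _ h1)
    clear hij h1
    fin_cases i <;> fin_cases j <;> exact h2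
  · intro x hx y hy
    have hmem : B x y ∈ (Rat.castHom ℂ).fieldRange := by
      rw [hBsum]
      exact sum_mem fun j _ => sum_mem fun k _ =>
        mul_mem (hV x hx j) (mul_mem (hV y hy k) (gram_rat a j k))
    obtain ⟨q, hq⟩ := hmem
    exact ⟨q, by simpa using hq.symm⟩
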